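/- Let F : ℝ³ → ℝ^{3×3} be a smooth matrix-valued function with F_{ij}(q) = −F_{ji}(q) for all q and all i,j. On smooth functions f, g : ℝ³ × ℝ³ → ℝ of the variables (q,p), define the magnetically twisted bracket {f,g}(q,p) := Σᵢ (∂f/∂pᵢ · ∂g/∂qᵢ − ∂f/∂qᵢ · ∂g/∂pᵢ) + Σᵢⱼ F_{ji}(q) · ∂f/∂pᵢ · ∂g/∂pⱼ. Then the Jacobi identity {f,{g,h}} + {g,{h,f}} + {h,{f,g}} = 0 holds for all smooth f, g, h : ℝ³ × ℝ³ → ℝ if and only if the Maxwell field equations ∂F_{ij}/∂q_k + ∂F_{jk}/∂q_i + ∂F_{ki}/∂q_j = 0 hold for all i, j, k ∈ {1,2,3} and all q ∈ ℝ³. -/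

import Mathlib

open scoped BigOperators

/-- Spatial partial derivative `∂f/∂xᵢ` of a scalar field on `ℝ³`. -/
noncomputable def pd (f : (Fin 3 → ℝ) → ℝ) (i : Fin 3) (x : Fin 3 → ℝ) : ℝ :=
  deriv (fun y => f (Function.update x i y)) (x i)

/-- Partial derivative `∂f/∂qᵢ` of a function on phase space `ℝ³ × ℝ³ ∋ (q,p)`. -/
noncomputable def pdq (f : (Fin 3 → ℝ) × (Fin 3 → ℝ) → ℝ) (i : Fin 3)
    (x : (Fin 3 → ℝ) × (Fin 3 → ℝ)) : ℝ :=
  deriv (fun y => f (Function.update x.1 i y, x.2)) (x.1 i)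

/-- Partial derivative `∂f/∂pᵢ` of a function on phase space `ℝ³ × ℝ³ ∋ (q,p)`. -/
noncomputable def pdp (f : (Fin 3 → ℝ) × (Fin 3 → ℝ) → ℝ) (i : Fin 3)
    (x : (Fin 3 → ℝ) × (Fin 3 → ℝ)) : ℝ :=
  deriv (fun y => f (x.1, Function.update x.2 i y)) (x.2 i)

/-- The magnetically twisted bracket
`{f,g}(q,p) := Σᵢ (∂f/∂pᵢ ∂g/∂qᵢ − ∂f/∂qᵢ ∂g/∂pᵢ) + Σᵢⱼ F_{ji}(q) ∂f/∂pᵢ ∂g/∂pⱼ`. -/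
noncomputable def magBracket (F : (Fin 3 → ℝ) → Fin 3 → Fin 3 → ℝ)
    (f g : (Fin 3 → ℝ) × (Fin 3 → ℝ) → ℝ) (x : (Fin 3 → ℝ) × (Fin 3 → ℝ)) : ℝ :=
  (∑ i, (pdp f i x * pdq g i x - pdq f i x * pdp g i x))
    + ∑ i, ∑ j, F x.1 j i * pdp f i x * pdp g j x

/-!
Write `{f, g} = dg(X_f)` with `X_f` the Hamiltonian vector field. Expanding `{f, {g, h}}` gives a
term with the derivative of the Poisson matrix along `X_f`, plus `D²h(X_f, X_g) - D²g(X_f, X_h)`; in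
the cyclic sum the second derivatives cancel in pairs because Hessians are symmetric. In the
magnetic Poisson matrix only `F` varies, and it sees only the position component of `X_f`, which is
`∂f/∂p`. So the Jacobiator is the contraction of `dF` with the three momentum gradients, and the
momentum coordinates recover every component of `dF`.
-/

/-- The left-hand side of the Jacobi identity for a bracket `b` on scalar functions. -/
def jacobiator {E 𝕜 : Type*} [Add 𝕜] (b : (E → 𝕜) → (E → 𝕜) → E → 𝕜) (f g h : E → 𝕜) (x : E) : 𝕜 :=
  b f (b g h) x + b g (b h f) x + b h (b f g) x

section PoissonBracket

variable {𝕜 E κ : Type*} [NontriviallyNormedField 𝕜] [NormedAddCommGroup E] [NormedSpace 𝕜 E]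
  [Fintype κ]

/-- The bracket `∑ₐᵦ πₐᵦ ∂ₐf ∂ᵦg` with coefficient matrix `π`, where `∂ₐ` is the derivative in the
constant direction `e a`. -/
noncomputable def poissonBracket (e : κ → E) (π : E → Matrix κ κ 𝕜) (f g : E → 𝕜) (x : E) : 𝕜 :=
  ∑ a, ∑ b, π x a b * fderiv 𝕜 f x (e a) * fderiv 𝕜 g x (e b)

/-- The vector field `X_f` with `{f, g} = dg(X_f)` for all `g`. -/
noncomputable def hamiltonianVectorField (e : κ → E) (π : E → Matrix κ κ 𝕜) (f : E → 𝕜) (x : E) :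
    E :=
  ∑ a, ∑ b, (π x a b * fderiv 𝕜 f x (e a)) • e b

variable {e : κ → E} {π : E → Matrix κ κ 𝕜} {f g h : E → 𝕜} {x : E}

theorem apply_hamiltonianVectorField (φ : E →L[𝕜] 𝕜) :
    φ (hamiltonianVectorField e π f x) = ∑ a, ∑ b, π x a b * fderiv 𝕜 f x (e a) * φ (e b) := by
  simp only [hamiltonianVectorField, map_sum, map_smul, smul_eq_mul]

theorem apply_hamiltonianVectorField_of_skew (hπ : ∀ a b, π x a b = -π x b a) (φ : E →L[𝕜] 𝕜) :
    φ (hamiltonianVectorField e π f x) = -∑ a, ∑ b, π x a b * φ (e a) * fderiv 𝕜 f x (e b) := by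
  rw [apply_hamiltonianVectorField, Finset.sum_comm]
  simp only [← Finset.sum_neg_distrib]
  refine Finset.sum_congr rfl fun a _ => Finset.sum_congr rfl fun b _ => ?_
  rw [hπ b a]
  ring

theorem hasFDerivAt_poissonBracket (hπ : ∀ a b, DifferentiableAt 𝕜 (fun y => π y a b) x)
    (hf : DifferentiableAt 𝕜 (fderiv 𝕜 f) x) (hg : DifferentiableAt 𝕜 (fderiv 𝕜 g) x) :
    HasFDerivAt (poissonBracket e π f g)
      (∑ a, ∑ b, ((π x a b * fderiv 𝕜 f x (e a)) • (fderiv 𝕜 (fderiv 𝕜 g) x).flip (e b)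
        + fderiv 𝕜 g x (e b) • (π x a b • (fderiv 𝕜 (fderiv 𝕜 f) x).flip (e a)
          + fderiv 𝕜 f x (e a) • fderiv 𝕜 (fun y => π y a b) x))) x := by
  have hasFDerivAt_directional {u : E → 𝕜} (hu : DifferentiableAt 𝕜 (fderiv 𝕜 u) x) (v : E) :
      HasFDerivAt (fun y => fderiv 𝕜 u y v) ((fderiv 𝕜 (fderiv 𝕜 u) x).flip v) x := by
    simpa using hu.hasFDerivAt.clm_apply (hasFDerivAt_const v x)
  exact HasFDerivAt.fun_sum fun a _ => HasFDerivAt.fun_sum fun b _ =>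
    ((hπ a b).hasFDerivAt.mul (hasFDerivAt_directional hf (e a))).mul
      (hasFDerivAt_directional hg (e b))

theorem fderiv_poissonBracket_apply (hπ : ∀ a b, DifferentiableAt 𝕜 (fun y => π y a b) x)
    (hskew : ∀ a b, π x a b = -π x b a) (hf : DifferentiableAt 𝕜 (fderiv 𝕜 f) x)
    (hg : DifferentiableAt 𝕜 (fderiv 𝕜 g) x) (v : E) :
    fderiv 𝕜 (poissonBracket e π f g) x v =
      (∑ a, ∑ b, fderiv 𝕜 (fun y => π y a b) x v * fderiv 𝕜 f x (e a) * fderiv 𝕜 g x (e b))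
        + fderiv 𝕜 (fderiv 𝕜 g) x v (hamiltonianVectorField e π f x)
        - fderiv 𝕜 (fderiv 𝕜 f) x v (hamiltonianVectorField e π g x) := by
  rw [(hasFDerivAt_poissonBracket hπ hf hg).fderiv, apply_hamiltonianVectorField,
    apply_hamiltonianVectorField_of_skew hskew, sub_neg_eq_add]
  simp only [sum_apply, add_apply, smul_apply, smul_eq_mul, ContinuousLinearMap.flip_apply,
    ← Finset.sum_add_distrib]
  refine Finset.sum_congr rfl fun a _ => Finset.sum_congr rfl fun b _ => ?_
  ring

end PoissonBracket

section Jacobiator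

variable {𝕜 E κ : Type*} [RCLike 𝕜] [NormedAddCommGroup E] [NormedSpace 𝕜 E] [Fintype κ]
  {e : κ → E} {π : E → Matrix κ κ 𝕜} {f g h : E → 𝕜} {x : E}

theorem differentiableAt_fderiv (hf : ContDiffAt 𝕜 2 f x) : DifferentiableAt 𝕜 (fderiv 𝕜 f) x :=
  (hf.fderiv_right (m := 1) (by norm_num)).differentiableAt one_ne_zero

theorem jacobiator_poissonBracket (hπ : ∀ a b, DifferentiableAt 𝕜 (fun y => π y a b) x)
    (hskew : ∀ a b, π x a b = -π x b a)
    (hf : ContDiffAt 𝕜 2 f x) (hg : ContDiffAt 𝕜 2 g x) (hh : ContDiffAt 𝕜 2 h x) :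
    jacobiator (poissonBracket e π) f g h x =
      (∑ a, ∑ b, fderiv 𝕜 (fun y => π y a b) x (hamiltonianVectorField e π f x)
          * fderiv 𝕜 g x (e a) * fderiv 𝕜 h x (e b))
        + (∑ a, ∑ b, fderiv 𝕜 (fun y => π y a b) x (hamiltonianVectorField e π g x)
          * fderiv 𝕜 h x (e a) * fderiv 𝕜 f x (e b))
        + ∑ a, ∑ b, fderiv 𝕜 (fun y => π y a b) x (hamiltonianVectorField e π h x)
          * fderiv 𝕜 f x (e a) * fderiv 𝕜 g x (e b) := by
  have bracket_eq (u v : E → 𝕜) :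
      poissonBracket e π u v x = fderiv 𝕜 v x (hamiltonianVectorField e π u x) :=
    (apply_hamiltonianVectorField _).symm
  have hess_symm {u : E → 𝕜} (hu : ContDiffAt 𝕜 2 u x) : IsSymmSndFDerivAt 𝕜 u x :=
    hu.isSymmSndFDerivAt (by simp)
  have hf' := differentiableAt_fderiv hf
  have hg' := differentiableAt_fderiv hg
  have hh' := differentiableAt_fderiv hh
  rw [jacobiator, bracket_eq f, bracket_eq g, bracket_eq h,
    fderiv_poissonBracket_apply hπ hskew hg' hh', fderiv_poissonBracket_apply hπ hskew hh' hf',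
    fderiv_poissonBracket_apply hπ hskew hf' hg',
    hess_symm hf (hamiltonianVectorField e π h x), hess_symm hg (hamiltonianVectorField e π h x),
    hess_symm hh (hamiltonianVectorField e π g x)]
  ring

end Jacobiator

section MagneticMatrix

variable {R ι : Type*} [Ring R] [DecidableEq ι]

/-- The coordinate direction `∂/∂qᵢ` of phase space. -/
def posDir (i : ι) : (ι → R) × (ι → R) := (Pi.single i 1, 0)

/-- The coordinate direction `∂/∂pᵢ` of phase space. -/
def momDir (i : ι) : (ι → R) × (ι → R) := (0, Pi.single i 1)

/-- The coordinate directions of phase space, with `Sum.inl` for positions and `Sum.inr` for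
momenta. -/
def phaseDir : ι ⊕ ι → (ι → R) × (ι → R) := Sum.elim posDir momDir

theorem phaseDir_inl (i : ι) : phaseDir (Sum.inl i) = (posDir i : (ι → R) × (ι → R)) := rfl

theorem phaseDir_inr (i : ι) : phaseDir (Sum.inr i) = (momDir i : (ι → R) × (ι → R)) := rfl

/-- The matrix of the brackets of the coordinate functions for the field tensor `F`. Here
`{pᵢ, pⱼ} = F_{ji}`, so `F` enters transposed. -/
def magneticMatrix (F : (ι → R) → ι → ι → R) (x : (ι → R) × (ι → R)) : Matrix (ι ⊕ ι) (ι ⊕ ι) R :=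
  Matrix.fromBlocks 0 (-1) 1 (Matrix.of (F x.1)).transpose

theorem magneticMatrix_skew {F : (ι → R) → ι → ι → R} {x : (ι → R) × (ι → R)}
    (hF : ∀ i j, F x.1 i j = -F x.1 j i) (a b : ι ⊕ ι) :
    magneticMatrix F x a b = -magneticMatrix F x b a := by
  rcases a with i | i <;> rcases b with j | j <;>
    simp [magneticMatrix, Matrix.one_apply, eq_comm, ← hF]

end MagneticMatrix

section MagneticBracket

variable {𝕜 ι : Type*} [NontriviallyNormedField 𝕜] [Fintype ι] [DecidableEq ι]

/-- The magnetically twisted bracket in arbitrary dimension. -/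
noncomputable abbrev magneticBracket (F : (ι → 𝕜) → ι → ι → 𝕜) :
    ((ι → 𝕜) × (ι → 𝕜) → 𝕜) → ((ι → 𝕜) × (ι → 𝕜) → 𝕜) → (ι → 𝕜) × (ι → 𝕜) → 𝕜 :=
  poissonBracket phaseDir (magneticMatrix F)

/-- The component `(dF)ᵢⱼₖ` of the exterior derivative of the field tensor; Maxwell's equations say
that all components vanish. -/
noncomputable def fieldExtDeriv (F : (ι → 𝕜) → ι → ι → 𝕜) (i j k : ι) (q : ι → 𝕜) : 𝕜 :=
  fderiv 𝕜 (fun y => F y i j) q (Pi.single k 1) + fderiv 𝕜 (fun y => F y j k) q (Pi.single i 1)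
    + fderiv 𝕜 (fun y => F y k i) q (Pi.single j 1)

variable {F : (ι → 𝕜) → ι → ι → 𝕜} {f g h : (ι → 𝕜) × (ι → 𝕜) → 𝕜} {x : (ι → 𝕜) × (ι → 𝕜)}

theorem magneticBracket_apply :
    magneticBracket F f g x =
      ∑ i, (fderiv 𝕜 f x (momDir i) * fderiv 𝕜 g x (posDir i)
          - fderiv 𝕜 f x (posDir i) * fderiv 𝕜 g x (momDir i))
        + ∑ i, ∑ j, F x.1 j i * fderiv 𝕜 f x (momDir i) * fderiv 𝕜 g x (momDir j) := by
  simp only [poissonBracket, magneticMatrix, phaseDir_inl, phaseDir_inr, Fintype.sum_sum_type,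
    Finset.sum_add_distrib, Finset.sum_sub_distrib, Finset.sum_neg_distrib,
    Matrix.fromBlocks_apply₁₁, Matrix.fromBlocks_apply₁₂, Matrix.fromBlocks_apply₂₁,
    Matrix.fromBlocks_apply₂₂, Matrix.zero_apply, Matrix.one_apply, Matrix.neg_apply,
    Matrix.transpose_apply, Matrix.of_apply, neg_mul, ite_mul, zero_mul, one_mul,
    Finset.sum_const_zero, Finset.sum_ite_eq, Finset.mem_univ, ↓reduceIte, zero_add]
  ring

theorem hamiltonianVectorField_magneticMatrix_fst :
    (hamiltonianVectorField phaseDir (magneticMatrix F) f x).1 =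
      ∑ i, fderiv 𝕜 f x (momDir i) • Pi.single i 1 := by
  simp [hamiltonianVectorField, phaseDir_inl, phaseDir_inr, magneticMatrix, posDir, momDir,
    Matrix.one_apply, Prod.fst_sum]

omit [Fintype ι] in
theorem differentiableAt_magneticMatrix [Finite ι]
    (hF : ∀ i j, DifferentiableAt 𝕜 (fun q => F q i j) x.1) (a b : ι ⊕ ι) :
    DifferentiableAt 𝕜 (fun y => magneticMatrix F y a b) x := by
  have := Fintype.ofFinite ι
  rcases a with i | i <;> rcases b with j | j <;>
    simp only [magneticMatrix, Matrix.fromBlocks_apply₁₁, Matrix.fromBlocks_apply₁₂,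
      Matrix.fromBlocks_apply₂₁, Matrix.fromBlocks_apply₂₂, differentiableAt_const]
  exact (hF j i).comp x differentiableAt_fst

theorem sum_fderiv_magneticMatrix (hF : ∀ i j, DifferentiableAt 𝕜 (fun q => F q i j) x.1) :
    ∑ a, ∑ b, fderiv 𝕜 (fun y => magneticMatrix F y a b) x
        (hamiltonianVectorField phaseDir (magneticMatrix F) f x)
        * fderiv 𝕜 g x (phaseDir a) * fderiv 𝕜 h x (phaseDir b) =
      ∑ i, ∑ j, ∑ k, fderiv 𝕜 f x (momDir k) * fderiv 𝕜 g x (momDir j) * fderiv 𝕜 h x (momDir i) *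
        fderiv 𝕜 (fun q => F q i j) x.1 (Pi.single k 1) := by
  have fderiv_field (i j : ι) (v : (ι → 𝕜) × (ι → 𝕜)) :
      fderiv 𝕜 (fun y : (ι → 𝕜) × (ι → 𝕜) => F y.1 i j) x v
        = fderiv 𝕜 (fun q => F q i j) x.1 v.1 := by
    have hcomp := (hF i j).hasFDerivAt.comp x hasFDerivAt_fst
    exact congrArg (· v) hcomp.fderiv
  simp only [Fintype.sum_sum_type, magneticMatrix, Matrix.fromBlocks_apply₁₁,
    Matrix.fromBlocks_apply₁₂, Matrix.fromBlocks_apply₂₁, Matrix.fromBlocks_apply₂₂,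
    Matrix.transpose_apply, Matrix.of_apply, fderiv_fun_const, fderiv_field, Pi.zero_apply,
    zero_apply, zero_mul, Finset.sum_const_zero, zero_add,
    hamiltonianVectorField_magneticMatrix_fst, phaseDir_inr, map_sum, map_smul,
    smul_eq_mul, Finset.sum_mul]
  rw [Finset.sum_comm]
  refine Finset.sum_congr rfl fun i _ => Finset.sum_congr rfl fun j _ =>
    Finset.sum_congr rfl fun k _ => ?_
  ring

end MagneticBracket

theorem fderiv_momentum_momDir {𝕜 ι : Type*} [NontriviallyNormedField 𝕜] [DecidableEq ι] (i j : ι)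
    (x : (ι → 𝕜) × (ι → 𝕜)) :
    fderiv 𝕜 (fun y : (ι → 𝕜) × (ι → 𝕜) => y.2 i) x (momDir j) = if i = j then 1 else 0 := by
  have hasFDerivAt_momentum : HasFDerivAt (fun y : (ι → 𝕜) × (ι → 𝕜) => y.2 i)
      ((ContinuousLinearMap.proj i).comp (ContinuousLinearMap.snd 𝕜 (ι → 𝕜) (ι → 𝕜))) x :=
    ((ContinuousLinearMap.proj i).comp (ContinuousLinearMap.snd 𝕜 (ι → 𝕜) (ι → 𝕜))).hasFDerivAt
  rw [hasFDerivAt_momentum.fderiv]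
  simp only [momDir, ContinuousLinearMap.comp_apply, ContinuousLinearMap.coe_snd',
    ContinuousLinearMap.proj_apply, Pi.single_apply]

section Maxwell

variable {𝕜 ι : Type*} [RCLike 𝕜] [Fintype ι] [DecidableEq ι] {F : (ι → 𝕜) → ι → ι → 𝕜}

theorem jacobiator_magneticBracket {f g h : (ι → 𝕜) × (ι → 𝕜) → 𝕜} {x : (ι → 𝕜) × (ι → 𝕜)}
    (hF : ∀ i j, DifferentiableAt 𝕜 (fun q => F q i j) x.1)
    (hskew : ∀ i j, F x.1 i j = -F x.1 j i)
    (hf : ContDiffAt 𝕜 2 f x) (hg : ContDiffAt 𝕜 2 g x) (hh : ContDiffAt 𝕜 2 h x) :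
    jacobiator (magneticBracket F) f g h x =
      ∑ i, ∑ j, ∑ k, fderiv 𝕜 f x (momDir k) * fderiv 𝕜 g x (momDir j) * fderiv 𝕜 h x (momDir i) *
        fieldExtDeriv F i j k x.1 := by
  have rotate (s : ι → ι → ι → 𝕜) : ∑ i, ∑ j, ∑ k, s i j k = ∑ j, ∑ k, ∑ i, s i j k := by
    rw [Finset.sum_comm]
    exact Finset.sum_congr rfl fun j _ => Finset.sum_comm
  rw [jacobiator_poissonBracket (differentiableAt_magneticMatrix hF) (magneticMatrix_skew hskew)
    hf hg hh, sum_fderiv_magneticMatrix hF, sum_fderiv_magneticMatrix hF,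
    sum_fderiv_magneticMatrix hF, rotate fun i j k => fderiv 𝕜 g x (momDir k) * _ * _ * _,
    ← rotate fun k i j => fderiv 𝕜 h x (momDir k) * _ * _ * _]
  simp only [← Finset.sum_add_distrib]
  refine Finset.sum_congr rfl fun i _ => Finset.sum_congr rfl fun j _ =>
    Finset.sum_congr rfl fun k _ => ?_
  rw [fieldExtDeriv]
  ring

theorem jacobiator_magneticBracket_momentum (hF : ∀ i j, Differentiable 𝕜 (fun q => F q i j))
    (hskew : ∀ q i j, F q i j = -F q j i) (i j k : ι) (x : (ι → 𝕜) × (ι → 𝕜)) :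
    jacobiator (magneticBracket F) (fun y => y.2 k) (fun y => y.2 j) (fun y => y.2 i) x =
      fieldExtDeriv F i j k x.1 := by
  rw [jacobiator_magneticBracket (fun i j => hF i j x.1) (hskew x.1) (by fun_prop) (by fun_prop)
    (by fun_prop)]
  simp [fderiv_momentum_momDir]

theorem jacobi_iff_maxwell_general {n : WithTop ℕ∞} (hn : 2 ≤ n)
    (hF : ∀ i j, Differentiable 𝕜 (fun q => F q i j)) (hskew : ∀ q i j, F q i j = -F q j i) :
    (∀ f g h : (ι → 𝕜) × (ι → 𝕜) → 𝕜, ContDiff 𝕜 n f → ContDiff 𝕜 n g → ContDiff 𝕜 n h →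
        ∀ x, jacobiator (magneticBracket F) f g h x = 0)
    ↔ ∀ i j k q, fieldExtDeriv F i j k q = 0 := by
  constructor
  · intro hJacobi i j k q
    rw [← jacobiator_magneticBracket_momentum hF hskew i j k (q, 0)]
    exact hJacobi _ _ _ (by fun_prop) (by fun_prop) (by fun_prop) _
  · intro hMaxwell f g h hf hg hh x
    rw [jacobiator_magneticBracket (fun i j => hF i j x.1) (hskew x.1)
      (hf.of_le hn).contDiffAt (hg.of_le hn).contDiffAt (hh.of_le hn).contDiffAt]
    simp only [hMaxwell, mul_zero, Finset.sum_const_zero]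

end Maxwell

section PartialDerivatives

variable {F : (Fin 3 → ℝ) → Fin 3 → Fin 3 → ℝ} {f g h : (Fin 3 → ℝ) × (Fin 3 → ℝ) → ℝ}
  {x : (Fin 3 → ℝ) × (Fin 3 → ℝ)}

theorem pd_eq_fderiv {u : (Fin 3 → ℝ) → ℝ} {q : Fin 3 → ℝ} (hu : DifferentiableAt ℝ u q)
    (i : Fin 3) : pd u i q = fderiv ℝ u q (Pi.single i 1) := by
  have hu' : HasFDerivAt u (fderiv ℝ u q) (Function.update q i (q i)) := by
    simpa only [Function.update_eq_self] using hu.hasFDerivAt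
  exact (hu'.comp_hasDerivAt (q i) (hasDerivAt_update q i (q i))).deriv

theorem pdq_eq_fderiv (hf : DifferentiableAt ℝ f x) (i : Fin 3) :
    pdq f i x = fderiv ℝ f x (posDir i) := by
  have hf' : HasFDerivAt (fun q => f (q, x.2)) _ x.1 :=
    hf.hasFDerivAt.comp x.1 (hasFDerivAt_prodMk_left x.1 x.2)
  exact (pd_eq_fderiv hf'.differentiableAt i).trans (by rw [hf'.fderiv]; rfl)

theorem pdp_eq_fderiv (hf : DifferentiableAt ℝ f x) (i : Fin 3) :
    pdp f i x = fderiv ℝ f x (momDir i) := by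
  have hf' : HasFDerivAt (fun p => f (x.1, p)) _ x.2 :=
    hf.hasFDerivAt.comp x.2 (hasFDerivAt_prodMk_right x.1 x.2)
  exact (pd_eq_fderiv hf'.differentiableAt i).trans (by rw [hf'.fderiv]; rfl)

theorem magBracket_eq_magneticBracket (hf : DifferentiableAt ℝ f x) (hg : DifferentiableAt ℝ g x) :
    magBracket F f g x = magneticBracket F f g x := by
  simp only [magBracket, magneticBracket_apply, pdq_eq_fderiv hf, pdq_eq_fderiv hg,
    pdp_eq_fderiv hf, pdp_eq_fderiv hg]

theorem magBracket_magBracket (hF : ∀ i j, Differentiable ℝ (fun q => F q i j))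
    (hf : Differentiable ℝ f) (hg : ContDiff ℝ 2 g) (hh : ContDiff ℝ 2 h) :
    magBracket F f (magBracket F g h) x = magneticBracket F f (magneticBracket F g h) x := by
  have inner_eq : magBracket F g h = magneticBracket F g h :=
    funext fun y => magBracket_eq_magneticBracket (hg.differentiable two_ne_zero y)
      (hh.differentiable two_ne_zero y)
  have inner_differentiable : DifferentiableAt ℝ (magneticBracket F g h) x :=
    (hasFDerivAt_poissonBracket (differentiableAt_magneticMatrix fun i j => hF i j x.1)
      (differentiableAt_fderiv hg.contDiffAt)
      (differentiableAt_fderiv hh.contDiffAt)).differentiableAt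
  rw [inner_eq, magBracket_eq_magneticBracket (hf x) inner_differentiable]

theorem jacobiator_magBracket (hF : ∀ i j, Differentiable ℝ (fun q => F q i j))
    (hf : ContDiff ℝ 2 f) (hg : ContDiff ℝ 2 g) (hh : ContDiff ℝ 2 h) :
    jacobiator (magBracket F) f g h x = jacobiator (magneticBracket F) f g h x := by
  have hf' := hf.differentiable two_ne_zero
  have hg' := hg.differentiable two_ne_zero
  have hh' := hh.differentiable two_ne_zero
  rw [jacobiator, magBracket_magBracket hF hf' hg hh, magBracket_magBracket hF hg' hh hf,
    magBracket_magBracket hF hh' hf hg, jacobiator]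

end PartialDerivatives

/-- for a smooth antisymmetric matrix field `F` on `ℝ³`, the magnetically
twisted bracket satisfies the Jacobi identity for all smooth functions on phase space iff
the Maxwell field equations `∂F_{ij}/∂q_k + ∂F_{jk}/∂q_i + ∂F_{ki}/∂q_j = 0` hold. -/
theorem jacobi_iff_maxwell
    (F : (Fin 3 → ℝ) → Fin 3 → Fin 3 → ℝ)
    (hFs : ∀ i j, ContDiff ℝ (⊤ : ℕ∞) (fun q => F q i j))
    (hFa : ∀ q i j, F q i j = - F q j i) :
    (∀ f g h : (Fin 3 → ℝ) × (Fin 3 → ℝ) → ℝ,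
        ContDiff ℝ (⊤ : ℕ∞) f → ContDiff ℝ (⊤ : ℕ∞) g → ContDiff ℝ (⊤ : ℕ∞) h →
        ∀ x, magBracket F f (magBracket F g h) x
            + magBracket F g (magBracket F h f) x
            + magBracket F h (magBracket F f g) x = 0)
    ↔ (∀ i j k : Fin 3, ∀ q : Fin 3 → ℝ,
        pd (fun y => F y i j) k q + pd (fun y => F y j k) i q
          + pd (fun y => F y k i) j q = 0) := by
  have hF i j : Differentiable ℝ (fun q => F q i j) := (hFs i j).differentiable (by simp)
  have hle : (2 : WithTop ℕ∞) ≤ (⊤ : ℕ∞) := WithTop.coe_le_coe.2 le_top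
  have general := jacobi_iff_maxwell_general hle hF hFa
  simp +contextual only [← jacobiator_magBracket hF, ContDiff.of_le _ hle, fieldExtDeriv,
    ← pd_eq_fderiv (hF _ _ _)] at general
  exact general
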